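/- arXiv:2412.07500 — 4 statements merged into one kernel-verified Lean document; each statement's English description precedes it below -/
import Mathlib

section
/- Let r > 0 and λ ≥ 1. If v ∈ C⁴([−r,r]) is even (v(−x) = v(x)) and satisfies v⁗(x) + 2v''(x) + λ·v(x) = 0 for all x ∈ (−r,r) together with v(r) = v(−r) = v'(r) = v'(−r) = 0, then v ≡ 0 on [−r,r]. -/
open Real Set

/-- **Lemma (no nontrivial even Dirichlet eigenfunctions for λ ≥ 1).**
If `r > 0`, `λ ≥ 1`, and `v ∈ C⁴([-r,r])` is even and satisfies
`v⁗ + 2v'' + λv = 0` on `(-r,r)` with `v(±r) = v'(±r) = 0`, then `v ≡ 0` on `[-r,r]`. -/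
theorem even_dirichlet_trivial_of_one_le (r lam : ℝ) (hr : 0 < r) (hlam : 1 ≤ lam)
    (v : ℝ → ℝ) (hreg : ContDiffOn ℝ 4 v (Set.Icc (-r) r))
    (heven : ∀ x ∈ Set.Icc (-r) r, v (-x) = v x)
    (hode : ∀ x ∈ Set.Ioo (-r) r,
      iteratedDeriv 4 v x + 2 * iteratedDeriv 2 v x + lam * v x = 0)
    (hbc₁ : v r = 0) (hbc₂ : v (-r) = 0)
    (hbc₃ : derivWithin v (Set.Icc (-r) r) r = 0)
    (hbc₄ : derivWithin v (Set.Icc (-r) r) (-r) = 0) :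
    ∀ x ∈ Set.Icc (-r) r, v x = 0 := by
  have hu : UniqueDiffOn ℝ (Icc (-r) r) := uniqueDiffOn_Icc (by linarith)
  have hrr : r ∈ Icc (-r) r := ⟨by linarith, le_rfl⟩
  have hlr : -r ∈ Icc (-r) r := ⟨le_rfl, by linarith⟩
  obtain ⟨d, hd⟩ : ∃ d : ℕ → ℝ → ℝ, d = fun k => iteratedDerivWithin k v (Icc (-r) r) :=
    ⟨_, rfl⟩
  have hc : ∀ k : ℕ, k ≤ 4 → ContinuousOn (d k) (Icc (-r) r) := by
    intro k hk
    rw [hd]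
    exact hreg.continuousOn_iteratedDerivWithin (by exact_mod_cast hk) hu
  have hD : ∀ k : ℕ, k < 4 → ∀ x ∈ Ioo (-r) r, HasDerivAt (d k) (d (k+1) x) x := by
    intro k hk x hx
    have h1 := (hreg.differentiableOn_iteratedDerivWithin (m := k)
      (by exact_mod_cast hk) hu) x (Ioo_subset_Icc_self hx)
    have h2 := h1.hasDerivWithinAt.hasDerivAt (Icc_mem_nhds hx.1 hx.2)
    rw [hd]
    simpa only [iteratedDerivWithin_succ] using h2
  have d0 : d 0 = v := by rw [hd]; simp
  have d1 : ∀ x, d 1 x = derivWithin v (Icc (-r) r) x := by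
    intro x; rw [hd]; simp [iteratedDerivWithin_one]
  have hode' : ∀ x ∈ Ioo (-r) r, d 4 x + 2 * d 2 x + lam * d 0 x = 0 := by
    intro x hx
    have h4 : ContDiffAt ℝ 4 v x := hreg.contDiffAt (Icc_mem_nhds hx.1 hx.2)
    have hx' := Ioo_subset_Icc_self hx
    have e4 : d 4 x = iteratedDeriv 4 v x := by
      rw [hd]; exact iteratedDerivWithin_eq_iteratedDeriv hu h4 hx'
    have e2 : d 2 x = iteratedDeriv 2 v x := by
      rw [hd]; exact iteratedDerivWithin_eq_iteratedDeriv hu (h4.of_le (by norm_num)) hx'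
    rw [e4, e2, d0]; exact hode x hx
  -- energy
  have hE : ∀ x ∈ Ioo (-r) r, HasDerivAt (fun y => d 0 y * d 3 y - d 1 y * d 2 y)
      (-((d 2 x + d 0 x)^2 + (lam - 1) * d 0 x ^ 2)) x := by
    intro x hx
    have h := ((hD 0 (by norm_num) x hx).mul (hD 3 (by norm_num) x hx)).sub
      ((hD 1 (by norm_num) x hx).mul (hD 2 (by norm_num) x hx))
    refine h.congr_deriv ?_
    norm_num
    linear_combination d 0 x * hode' x hx
  have hEc : ContinuousOn (fun y => d 0 y * d 3 y - d 1 y * d 2 y) (Icc (-r) r) :=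
    ((hc 0 (by norm_num)).mul (hc 3 (by norm_num))).sub
      ((hc 1 (by norm_num)).mul (hc 2 (by norm_num)))
  have hanti : AntitoneOn (fun y => d 0 y * d 3 y - d 1 y * d 2 y) (Icc (-r) r) := by
    apply antitoneOn_of_deriv_nonpos (convex_Icc _ _) hEc
    · intro x hx
      rw [interior_Icc] at hx
      exact (hE x hx).differentiableAt.differentiableWithinAt
    · intro x hx
      rw [interior_Icc] at hx
      rw [(hE x hx).deriv]
      have : 0 ≤ (lam - 1) * d 0 x ^ 2 := mul_nonneg (by linarith) (sq_nonneg _)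
      nlinarith [sq_nonneg (d 2 x + d 0 x)]
  have hE0 : ∀ x ∈ Icc (-r) r, d 0 x * d 3 x - d 1 x * d 2 x = 0 := by
    intro x hx
    have h1 := hanti hx hrr hx.2
    have h2 := hanti hlr hx hx.1
    simp only [d0, d1, hbc₁, hbc₂, hbc₃, hbc₄] at h1 h2 ⊢
    linarith
  have hw : ∀ x ∈ Ioo (-r) r, d 2 x = - d 0 x := by
    intro x hx
    have h0 : HasDerivAt (fun y => d 0 y * d 3 y - d 1 y * d 2 y) 0 x := by
      refine (hasDerivAt_const x (0:ℝ)).congr_of_eventuallyEq ?_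
      filter_upwards [Icc_mem_nhds hx.1 hx.2] with y hy using hE0 y hy
    have h := (hE x hx).unique h0
    have : 0 ≤ (lam - 1) * d 0 x ^ 2 := mul_nonneg (by linarith) (sq_nonneg _)
    have h3 : (d 2 x + d 0 x)^2 = 0 := by nlinarith [sq_nonneg (d 2 x + d 0 x)]
    have := pow_eq_zero_iff (two_ne_zero) |>.mp h3
    linarith
  have hF : ∀ x ∈ Ioo (-r) r, HasDerivAt (fun y => d 0 y * d 0 y + d 1 y * d 1 y) 0 x := by
    intro x hx
    have h := ((hD 0 (by norm_num) x hx).mul (hD 0 (by norm_num) x hx)).add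
      ((hD 1 (by norm_num) x hx).mul (hD 1 (by norm_num) x hx))
    refine h.congr_deriv ?_
    norm_num
    rw [hw x hx]; ring
  have hFc : ContinuousOn (fun y => d 0 y * d 0 y + d 1 y * d 1 y) (Icc (-r) r) :=
    ((hc 0 (by norm_num)).mul (hc 0 (by norm_num))).add
      ((hc 1 (by norm_num)).mul (hc 1 (by norm_num)))
  have hFm : MonotoneOn (fun y => d 0 y * d 0 y + d 1 y * d 1 y) (Icc (-r) r) := by
    apply monotoneOn_of_deriv_nonneg (convex_Icc _ _) hFc
    · intro x hx
      rw [interior_Icc] at hx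
      exact (hF x hx).differentiableAt.differentiableWithinAt
    · intro x hx
      rw [interior_Icc] at hx
      rw [(hF x hx).deriv]
  intro x hx
  have h1 := hFm hx hrr hx.2
  simp only [d0, d1, hbc₁, hbc₃] at h1
  have h2 : v x * v x = 0 := by
    nlinarith [mul_self_nonneg (v x), mul_self_nonneg (derivWithin v (Icc (-r) r) x)]
  exact mul_self_eq_zero.mp h2
end

section
/- Let r > 0 and λ ∈ (0,1), and set ν₁ := √(1 − √(1−λ)) and ν₂ := √(1 + √(1−λ)). Then the even Dirichlet problem v⁗ + 2v'' + λv = 0 on (−r,r), v(±r) = v'(±r) = 0, v(−x) = v(x), has a nontrivial solution v ∈ C⁴([−r,r]) if and only if ν₂·sin(ν₂ r)·cos(ν₁ r) − ν₁·cos(ν₂ r)·sin(ν₁ r) = 0. -/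
open Real Set

lemma aux_hasDeriv (v : ℝ → ℝ) (r x : ℝ) (k : ℕ) (hk : k < 4)
    (hv : ContDiffOn ℝ 4 v (Set.Icc (-r) r)) (hx : x ∈ Set.Ioo (-r) r) :
    HasDerivAt (iteratedDeriv k v) (iteratedDeriv (k+1) v x) x := by
  have h1 : ContDiffAt ℝ 4 v x := hv.contDiffAt (Icc_mem_nhds hx.1 hx.2)
  have h2 : DifferentiableAt ℝ (iteratedDeriv k v) x := by
    have h3 : ContDiffOn ℝ 4 v (Set.Ioo (-r) r) := hv.mono Ioo_subset_Icc_self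
    have h4 := h3.differentiableOn_iteratedDerivWithin (m := k) (by exact_mod_cast hk)
      isOpen_Ioo.uniqueDiffOn
    have h5 := h4.congr (fun y hy => (iteratedDerivWithin_of_isOpen isOpen_Ioo hy).symm)
    exact h5.differentiableAt (isOpen_Ioo.mem_nhds hx)
  rw [iteratedDeriv_succ]
  exact h2.hasDerivAt

lemma aux_odd (v : ℝ → ℝ) (r : ℝ) (hr : 0 < r) (k : ℕ) (hk : (-1 : ℝ) ^ k = -1)
    (he : ∀ x ∈ Set.Icc (-r) r, v (-x) = v x) : iteratedDeriv k v 0 = 0 := by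
  have h : (fun x => v (-x)) =ᶠ[nhds 0] v := by
    filter_upwards [Icc_mem_nhds (show -r < 0 by linarith) hr] with x hx using he x hx
  have h2 := h.iteratedDeriv_eq k
  rw [iteratedDeriv_comp_neg] at h2
  simp [hk] at h2
  linarith

lemma aux_second (w w' : ℝ → ℝ) (r a : ℝ) (hr : 0 < r) (ha : 0 < a)
    (h1 : ∀ x ∈ Set.Ioo (-r) r, HasDerivAt w (w' x) x)
    (h2 : ∀ x ∈ Set.Ioo (-r) r, HasDerivAt w' (-a^2 * w x) x)
    (h0 : w' 0 = 0) : ∀ x ∈ Set.Ioo (-r) r, w x = w 0 * Real.cos (a * x) := by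
  intro x hx
  have hz : (0:ℝ) ∈ Set.Ioo (-r) r := ⟨by linarith, hr⟩
  have hc : ∀ y, HasDerivAt (fun y => Real.cos (a * y)) (-Real.sin (a*y) * a) y := fun y => by
    simpa using ((hasDerivAt_id y).const_mul a).cos
  have hs : ∀ y, HasDerivAt (fun y => Real.sin (a * y)) (Real.cos (a*y) * a) y := fun y => by
    simpa using ((hasDerivAt_id y).const_mul a).sin
  have key : ∀ g : ℝ → ℝ, (∀ y ∈ Set.Ioo (-r) r, HasDerivAt g 0 y) → g x = g 0 := by
    intro g hg
    exact isOpen_Ioo.is_const_of_deriv_eq_zero isPreconnected_Ioo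
      (fun y hy => (hg y hy).differentiableAt.differentiableWithinAt)
      (fun y hy => (hg y hy).deriv) hx hz
  have P := key (fun y => a * (w y * Real.cos (a*y)) - w' y * Real.sin (a*y)) (by
    intro y hy
    have := (((h1 y hy).mul (hc y)).const_mul a).sub ((h2 y hy).mul (hs y))
    exact this.congr_deriv (by ring))
  have Q := key (fun y => a * (w y * Real.sin (a*y)) + w' y * Real.cos (a*y)) (by
    intro y hy
    have := (((h1 y hy).mul (hs y)).const_mul a).add ((h2 y hy).mul (hc y))
    exact this.congr_deriv (by ring))
  simp [h0] at P Q
  have sc := Real.sin_sq_add_cos_sq (a*x)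
  have : a * (w x - w 0 * Real.cos (a*x)) = 0 := by
    linear_combination Real.cos (a*x) * P + Real.sin (a*x) * Q - a * w x * sc
  rcases mul_eq_zero.1 this with h | h
  · exact absurd h ha.ne'
  · linarith

lemma aux_f1 (A B a b : ℝ) (x : ℝ) :
    HasDerivAt (fun x => A * Real.cos (a * x) + B * Real.cos (b * x))
      ((-A*a) * Real.sin (a * x) + (-B*b) * Real.sin (b * x)) x := by
  have h := ((((hasDerivAt_id x).const_mul a).cos).const_mul A).add
    ((((hasDerivAt_id x).const_mul b).cos).const_mul B)
  exact h.congr_deriv (by simp; ring)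

lemma aux_f2 (A B a b : ℝ) (x : ℝ) :
    HasDerivAt (fun x => A * Real.sin (a * x) + B * Real.sin (b * x))
      ((A*a) * Real.cos (a * x) + (B*b) * Real.cos (b * x)) x := by
  have h := ((((hasDerivAt_id x).const_mul a).sin).const_mul A).add
    ((((hasDerivAt_id x).const_mul b).sin).const_mul B)
  exact h.congr_deriv (by simp; ring)

lemma aux_it2 (A B a b : ℝ) :
    iteratedDeriv 2 (fun x => A * Real.cos (a * x) + B * Real.cos (b * x))
      = fun x => (-A*a*a) * Real.cos (a * x) + (-B*b*b) * Real.cos (b * x) := by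
  rw [iteratedDeriv_succ, iteratedDeriv_one]
  rw [show deriv (fun x => A * Real.cos (a * x) + B * Real.cos (b * x)) = _ from
    funext fun x => (aux_f1 A B a b x).deriv]
  exact funext fun x => (aux_f2 _ _ a b x).deriv

lemma aux_it4 (A B a b : ℝ) :
    iteratedDeriv 4 (fun x => A * Real.cos (a * x) + B * Real.cos (b * x))
      = fun x => (A*a^4) * Real.cos (a * x) + (B*b^4) * Real.cos (b * x) := by
  have h2 := aux_it2 A B a b
  rw [iteratedDeriv_succ, iteratedDeriv_succ, h2, ← iteratedDeriv_one, iteratedDeriv_one,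
    ← iteratedDeriv_one (f := fun x => (-A*a*a) * Real.cos (a * x) + (-B*b*b) * Real.cos (b * x)),
    ← iteratedDeriv_succ, aux_it2]
  funext x
  ring

/-- **Lemma (characteristic equation of the even Dirichlet problem).** For `r > 0` and
`λ ∈ (0,1)`, with `ν₁ = √(1 - √(1-λ))` and `ν₂ = √(1 + √(1-λ))`, the problem
`v⁗ + 2v'' + λv = 0` on `(-r,r)`, `v(±r) = v'(±r) = 0`, `v` even, has a nontrivial
solution `v ∈ C⁴([-r,r])` iff `ν₂ sin(ν₂r) cos(ν₁r) - ν₁ cos(ν₂r) sin(ν₁r) = 0`. -/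
theorem even_dirichlet_characteristic (r lam ν₁ ν₂ : ℝ) (hr : 0 < r)
    (hlam₁ : 0 < lam) (hlam₂ : lam < 1)
    (hν₁ : ν₁ = Real.sqrt (1 - Real.sqrt (1 - lam)))
    (hν₂ : ν₂ = Real.sqrt (1 + Real.sqrt (1 - lam))) :
    (∃ v : ℝ → ℝ, ContDiffOn ℝ 4 v (Set.Icc (-r) r) ∧
      (∃ x ∈ Set.Icc (-r) r, v x ≠ 0) ∧
      (∀ x ∈ Set.Icc (-r) r, v (-x) = v x) ∧
      (∀ x ∈ Set.Ioo (-r) r,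
        iteratedDeriv 4 v x + 2 * iteratedDeriv 2 v x + lam * v x = 0) ∧
      v r = 0 ∧ v (-r) = 0 ∧
      derivWithin v (Set.Icc (-r) r) r = 0 ∧ derivWithin v (Set.Icc (-r) r) (-r) = 0)
    ↔ ν₂ * Real.sin (ν₂ * r) * Real.cos (ν₁ * r)
        - ν₁ * Real.cos (ν₂ * r) * Real.sin (ν₁ * r) = 0 := by
  obtain ⟨s, hs⟩ : ∃ s, s = Real.sqrt (1 - lam) := ⟨_, rfl⟩
  rw [← hs] at hν₁ hν₂
  have hs0 : 0 < s := by rw [hs]; exact Real.sqrt_pos.2 (by linarith)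
  have hss : s ^ 2 = 1 - lam := by rw [hs]; exact Real.sq_sqrt (by linarith)
  have hs1 : s < 1 := by nlinarith
  have p1 : 0 < ν₁ := by rw [hν₁]; exact Real.sqrt_pos.2 (by linarith)
  have p2 : 0 < ν₂ := by rw [hν₂]; exact Real.sqrt_pos.2 (by linarith)
  have q1 : ν₁ ^ 2 = 1 - s := by rw [hν₁]; exact Real.sq_sqrt (by linarith)
  have q2 : ν₂ ^ 2 = 1 + s := by rw [hν₂]; exact Real.sq_sqrt (by linarith)
  clear hν₁ hν₂ hs
  have hz : (0:ℝ) ∈ Set.Ioo (-r) r := ⟨by linarith, hr⟩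
  have hrm : r ∈ Set.Icc (-r) r := ⟨by linarith, le_rfl⟩
  have hrm' : -r ∈ Set.Icc (-r) r := ⟨le_rfl, by linarith⟩
  have hud : UniqueDiffOn ℝ (Set.Icc (-r) r) := uniqueDiffOn_Icc (by linarith)
  constructor
  · rintro ⟨v, hv, ⟨x₀, hx₀, hne⟩, he, hode, b1, -, b2, -⟩
    have o1 := aux_odd v r hr 1 (by norm_num) he
    have o3 := aux_odd v r hr 3 (by norm_num) he
    have d0 : ∀ x ∈ Set.Ioo (-r) r, HasDerivAt v (iteratedDeriv 1 v x) x := fun x hx => by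
      have := aux_hasDeriv v r x 0 (by norm_num) hv hx
      rwa [iteratedDeriv_zero] at this
    have gen : ∀ a b : ℝ, 0 < a → a^2 + b^2 = 2 → a^2 * b^2 = lam →
        ∀ x ∈ Set.Ioo (-r) r, iteratedDeriv 2 v x + b^2 * v x
          = (iteratedDeriv 2 v 0 + b^2 * v 0) * Real.cos (a * x) := by
      intro a b ha h1 h2
      refine aux_second (fun x => iteratedDeriv 2 v x + b^2 * v x)
        (fun x => iteratedDeriv 3 v x + b^2 * iteratedDeriv 1 v x) r a hr ha ?_ ?_ ?_
      · intro x hx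
        exact (aux_hasDeriv v r x 2 (by norm_num) hv hx).add ((d0 x hx).const_mul _)
      · intro x hx
        have := (aux_hasDeriv v r x 3 (by norm_num) hv hx).add
          ((aux_hasDeriv v r x 1 (by norm_num) hv hx).const_mul (b^2))
        refine this.congr_deriv ?_
        have := hode x hx
        norm_num
        linear_combination this + iteratedDeriv 2 v x * h1 + v x * h2
      · simp [o1, o3]
    have g1 := gen ν₁ ν₂ p1 (by linarith) (by rw [q1, q2]; linarith)
    have g2 := gen ν₂ ν₁ p2 (by linarith) (by rw [q1, q2]; linarith)
    obtain ⟨C, hC⟩ : ∃ C, C = (iteratedDeriv 2 v 0 + ν₂^2 * v 0) := ⟨_, rfl⟩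
    obtain ⟨D, hD⟩ : ∃ D, D = (iteratedDeriv 2 v 0 + ν₁^2 * v 0) := ⟨_, rfl⟩
    rw [← hC] at g1
    rw [← hD] at g2
    have e : Set.EqOn v (fun x => (C/(2*s)) * Real.cos (ν₁ * x) + (-D/(2*s)) * Real.cos (ν₂ * x))
        (Set.Icc (-r) r) := by
      refine Set.EqOn.of_subset_closure (s := Set.Ioo (-r) r) ?_ hv.continuousOn
        (by fun_prop) Ioo_subset_Icc_self (by rw [closure_Ioo (by linarith)])
      intro x hx
      have e1 := g1 x hx
      have e2 := g2 x hx
      rw [q2] at e1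
      rw [q1] at e2
      simp only
      rw [show (C/(2*s)) * Real.cos (ν₁ * x) + (-D/(2*s)) * Real.cos (ν₂ * x)
        = (C * Real.cos (ν₁ * x) - D * Real.cos (ν₂ * x)) / (2*s) by ring,
        eq_div_iff (by positivity)]
      linear_combination e1 - e2
    generalize C/(2*s) = A at e
    generalize -D/(2*s) = B at e
    have E1 := e hrm
    have E2 : derivWithin v (Set.Icc (-r) r) r
        = (-A*ν₁) * Real.sin (ν₁ * r) + (-B*ν₂) * Real.sin (ν₂ * r) := by
      rw [derivWithin_congr e (e hrm)]
      exact (aux_f1 A B ν₁ ν₂ r).hasDerivWithinAt.derivWithin (hud r hrm)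
    rw [b1] at E1
    rw [b2] at E2
    simp only at E1
    by_cases hA : A = 0
    · by_cases hB : B = 0
      · exact absurd (by rw [e hx₀]; simp [hA, hB]) hne
      · apply (mul_eq_zero.1 (_ : B * _ = 0)).resolve_left hB
        linear_combination Real.cos (ν₁*r) * E2 + ν₁ * Real.sin (ν₁ * r) * E1
    · apply (mul_eq_zero.1 (_ : A * _ = 0)).resolve_left hA
      linear_combination -Real.cos (ν₂*r) * E2 - ν₂ * Real.sin (ν₂ * r) * E1
  · intro h
    obtain ⟨A, B, hAB, E1, E2⟩ : ∃ A B : ℝ, (A ≠ 0 ∨ B ≠ 0) ∧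
        A * Real.cos (ν₁ * r) + B * Real.cos (ν₂ * r) = 0 ∧
        (-A*ν₁) * Real.sin (ν₁ * r) + (-B*ν₂) * Real.sin (ν₂ * r) = 0 := by
      by_cases c1 : Real.cos (ν₁ * r) = 0
      · by_cases c2 : Real.cos (ν₂ * r) = 0
        · refine ⟨ν₂ * Real.sin (ν₂ * r), -(ν₁ * Real.sin (ν₁ * r)), Or.inl ?_, ?_, ?_⟩
          · have := Real.sin_sq_add_cos_sq (ν₂ * r)
            intro h0
            have := (mul_eq_zero.1 h0).resolve_left p2.ne'
            simp_all
          · rw [c1, c2]; ring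
          · ring
        · exact ⟨Real.cos (ν₂ * r), -Real.cos (ν₁ * r), Or.inl c2, by ring, by
            linear_combination h⟩
      · exact ⟨Real.cos (ν₂ * r), -Real.cos (ν₁ * r), Or.inr (neg_ne_zero.2 c1), by ring, by
            linear_combination h⟩
    have E2' : ∀ x ∈ Set.Icc (-r) r, derivWithin
        (fun x => A * Real.cos (ν₁ * x) + B * Real.cos (ν₂ * x)) (Set.Icc (-r) r) x = _ :=
      fun x hx => (aux_f1 A B ν₁ ν₂ x).hasDerivWithinAt.derivWithin (hud x hx)
    refine ⟨fun x => A * Real.cos (ν₁ * x) + B * Real.cos (ν₂ * x), ?_, ?_, ?_, ?_, ?_, ?_, ?_, ?_⟩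
    · apply ContDiff.contDiffOn
      fun_prop
    · by_contra! hc
      have hev : (fun x => A * Real.cos (ν₁ * x) + B * Real.cos (ν₂ * x)) =ᶠ[nhds 0]
          (fun _ => (0:ℝ)) := by
        filter_upwards [Icc_mem_nhds hz.1 hz.2] with x hx using hc x hx
      have k0 := hev.eq_of_nhds
      have k2 := hev.iteratedDeriv_eq 2
      rw [aux_it2] at k2
      simp [iteratedDeriv_const] at k0 k2
      have hB : B * (2 * s) = 0 := by
        linear_combination -k2 - (1 - s) * k0 + (-A) * q1 - B * q2
      have hB' : B = 0 := (mul_eq_zero.1 hB).resolve_right (by positivity)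
      have hA' : A = 0 := by linarith
      tauto
    · intro x _
      simp
    · intro x _
      rw [aux_it2, aux_it4]
      have r1 : ν₁^4 - 2 * ν₁^2 + lam = 0 := by
        rw [show ν₁^4 = (ν₁^2)^2 by ring, q1]; linarith
      have r2 : ν₂^4 - 2 * ν₂^2 + lam = 0 := by
        rw [show ν₂^4 = (ν₂^2)^2 by ring, q2]; linarith
      linear_combination A * Real.cos (ν₁*x) * r1 + B * Real.cos (ν₂ * x) * r2
    · exact E1
    · simpa using E1
    · rw [E2' r hrm]; exact E2
    · rw [E2' _ hrm']; simp only [mul_neg, Real.sin_neg]; linarith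
end

section
/- Define g(u) := u·(u² + 3) + (u² − 3)·(u² + 1)·arctan u. Then g(u) > 0 for all u > 0. Consequently, G(p,x) := (px²+1)²·(√p·x·(px²+3) + (px²−3)(px²+1)·arctan(√p·x)) / (4·p^{5/2}·x²) satisfies G(p,x) > 0 for all p, x > 0. -/
open Real

noncomputable section

/-- `g(u) = u(u² + 3) + (u² - 3)(u² + 1) arctan u`. -/
def gfun (u : ℝ) : ℝ :=
  u * (u ^ 2 + 3) + (u ^ 2 - 3) * (u ^ 2 + 1) * Real.arctan u

/-- `G(p,x)` from Lemma 5.4. -/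
def Gfun (p x : ℝ) : ℝ :=
  ((p * x ^ 2 + 1) ^ 2 *
    (Real.sqrt p * x * (p * x ^ 2 + 3) +
      (p * x ^ 2 - 3) * (p * x ^ 2 + 1) * Real.arctan (Real.sqrt p * x))) /
    (4 * Real.sqrt (p ^ 5) * x ^ 2)

theorem arctan_lt_aux (u : ℝ) (hu : 0 < u) (h3 : u ^ 2 < 3) :
    Real.arctan u < u * (u ^ 2 + 3) / ((3 - u ^ 2) * (u ^ 2 + 1)) := by
  have hd : ∀ y ∈ Set.Icc 0 u, HasDerivAt
      (fun y : ℝ => y * (y ^ 2 + 3) / ((3 - y ^ 2) * (y ^ 2 + 1)) - Real.arctan y)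
      (16 * y ^ 4 / ((3 - y ^ 2) ^ 2 * (y ^ 2 + 1) ^ 2)) y := by
    intro y hy
    have hy3 : 0 < 3 - y ^ 2 := by nlinarith [hy.1, hy.2]
    have hy1 : 0 < y ^ 2 + 1 := by positivity
    have hy1' : 1 + y ^ 2 ≠ 0 := by positivity
    have h1 := (hasDerivAt_id' y).mul (((hasDerivAt_id' y).pow 2).add_const 3)
    have h2 := (((hasDerivAt_id' y).pow 2).const_sub 3).mul
      (((hasDerivAt_id' y).pow 2).add_const 1)
    have h4 := (h1.div h2 (mul_pos hy3 hy1).ne').sub (Real.hasDerivAt_arctan y)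
    refine h4.congr_deriv ?_
    simp only [Pi.mul_apply, Pi.pow_apply]
    have := hy3.ne'
    have := hy1.ne'
    field_simp
    push_cast
    ring
  have hm : StrictMonoOn
      (fun y : ℝ => y * (y ^ 2 + 3) / ((3 - y ^ 2) * (y ^ 2 + 1)) - Real.arctan y)
      (Set.Icc 0 u) := by
    apply strictMonoOn_of_deriv_pos (convex_Icc 0 u)
    · exact fun y hy => (hd y hy).continuousAt.continuousWithinAt
    · intro y hy
      rw [interior_Icc] at hy
      rw [(hd y ⟨hy.1.le, hy.2.le⟩).deriv]
      have hy0 : 0 < y := hy.1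
      have hy3 : 0 < 3 - y ^ 2 := by nlinarith [hy.1, hy.2]
      positivity
  have := hm ⟨le_rfl, hu.le⟩ ⟨hu.le, le_rfl⟩ hu
  simp only [Real.arctan_zero, zero_mul, zero_div, sub_zero] at this
  linarith

theorem gfun_pos_aux (u : ℝ) (hu : 0 < u) : 0 < gfun u := by
  unfold gfun
  rcases lt_or_ge (u ^ 2) 3 with h | h
  · have h1 := arctan_lt_aux u hu h
    have h3 : 0 < 3 - u ^ 2 := by linarith
    rw [lt_div_iff₀ (by positivity)] at h1
    linarith
  · have ha : 0 < Real.arctan u := Real.arctan_pos.2 hu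
    have h3 : 0 ≤ u ^ 2 - 3 := by linarith
    positivity

/-- **Positivity of `g` and `G`.** `g(u) > 0` for all `u > 0`, and consequently
`G(p,x) > 0` for all `p, x > 0`. -/
theorem gfun_pos_and_Gfun_pos :
    (∀ u : ℝ, 0 < u → 0 < gfun u) ∧ ∀ p x : ℝ, 0 < p → 0 < x → 0 < Gfun p x := by
  refine ⟨gfun_pos_aux, fun p x hp hx => ?_⟩
  have h := gfun_pos_aux (Real.sqrt p * x) (by positivity)
  unfold gfun at h
  rw [mul_pow, Real.sq_sqrt hp.le] at h
  unfold Gfun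
  exact div_pos (mul_pos (by positivity) h) (by positivity)

end
end

section
/- Define 𝒬(s) := (2s + 1)/(s³(s + 2)) for s > 0, ℬ*(s) := (5/18)·s·(s + 2) for s > 0, and P(α) := (675·α + 125 + √(125·(18α + 5)³)) / (2916·α²) for α > 0. Then 𝒬 is strictly decreasing on (0,+∞) and maps (0,+∞) onto (0,+∞), and for every s > 0 the identity P(𝒬(s)·ℬ*(s)) = ℬ*(s) holds; in particular, the graph of P coincides with the parametrized curve {(𝒬(s)·ℬ*(s), ℬ*(s)) : s > 0}. -/
open Real Set

noncomputable section

/-- `𝒬(s) = (2s+1)/(s³(s+2))`. -/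
def Qc (s : ℝ) : ℝ := (2 * s + 1) / (s ^ 3 * (s + 2))

/-- `ℬ*(s) = (5/18)s(s+2)`. -/
def Bstar (s : ℝ) : ℝ := (5 / 18) * s * (s + 2)

/-- `P(α) = (675α + 125 + √(125(18α+5)³)) / (2916α²)`. -/
def Pfun (α : ℝ) : ℝ :=
  (675 * α + 125 + Real.sqrt (125 * (18 * α + 5) ^ 3)) / (2916 * α ^ 2)

lemma QB_eq (s : ℝ) (hs : 0 < s) : Qc s * Bstar s = 5 * (2 * s + 1) / (18 * s ^ 2) := by
  unfold Qc Bstar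
  have : s + 2 ≠ 0 := by positivity
  field_simp

lemma P_eq (s : ℝ) (hs : 0 < s) : Pfun (Qc s * Bstar s) = Bstar s := by
  rw [QB_eq s hs]
  unfold Pfun Bstar
  have h : 125 * (18 * (5 * (2 * s + 1) / (18 * s ^ 2)) + 5) ^ 3
      = (125 * (s + 1) ^ 3 / s ^ 3) ^ 2 := by
    field_simp
    ring
  rw [h, Real.sqrt_sq (by positivity)]
  have : 2 * s + 1 ≠ 0 := by positivity
  field_simp
  ring

/-- **Remark (envelope description of `P`).** `𝒬` is strictly decreasing on `(0,∞)` and maps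
`(0,∞)` onto `(0,∞)`; for every `s > 0`, `P(𝒬(s)ℬ*(s)) = ℬ*(s)`; hence the graph of `P`
over `(0,∞)` is the parametrized curve `{(𝒬(s)ℬ*(s), ℬ*(s)) : s > 0}`. -/
theorem Pfun_envelope_description :
    StrictAntiOn Qc (Set.Ioi 0) ∧
    Qc '' Set.Ioi 0 = Set.Ioi 0 ∧
    (∀ s : ℝ, 0 < s → Pfun (Qc s * Bstar s) = Bstar s) ∧
    {p : ℝ × ℝ | 0 < p.1 ∧ p.2 = Pfun p.1}
      = {p : ℝ × ℝ | ∃ s : ℝ, 0 < s ∧ p = (Qc s * Bstar s, Bstar s)} := by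
  refine ⟨?_, ?_, P_eq, ?_⟩
  · intro a ha b hb hab
    simp only [Set.mem_Ioi] at ha hb
    unfold Qc
    rw [div_lt_div_iff₀ (by positivity) (by positivity)]
    have h3 : a ^ 3 < b ^ 3 := by gcongr
    have h4 : a ^ 4 < b ^ 4 := by gcongr
    have h2 : a ^ 2 < b ^ 2 := by gcongr
    have hp : 0 < a * b := by positivity
    have e1 := mul_lt_mul_of_pos_left h3 hp
    have e2 := mul_lt_mul_of_pos_left h2 hp
    linarith
  · ext y
    simp only [Set.mem_image, Set.mem_Ioi]
    constructor
    · rintro ⟨s, hs, rfl⟩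
      unfold Qc
      positivity
    · intro hy
      have ha : (0:ℝ) < 1 / (2 * (1 + y)) := by positivity
      have hb : (1:ℝ) < 1 + 2 / y := by
        have : 0 < 2 / y := by positivity
        linarith
      have hay : 1 / (2 * (1 + y)) * (2 * (1 + y)) = 1 := by field_simp
      have hby : (1 + 2 / y) * y = y + 2 := by field_simp
      generalize 1 / (2 * (1 + y)) = a at *
      generalize 1 + 2 / y = b at *
      have ha1 : a < 1 := by nlinarith
      have hc : ContinuousOn Qc (Set.Icc a b) := by
        unfold Qc
        apply ContinuousOn.div (by fun_prop) (by fun_prop)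
        intro x hx
        have : 0 < x := lt_of_lt_of_le ha hx.1
        positivity
      have hmem : y ∈ Set.Icc (Qc b) (Qc a) := by
        unfold Qc
        have hb0 : 0 < b := by linarith
        constructor
        · rw [div_le_iff₀ (by positivity)]
          have h1 : b ≤ b ^ 3 := le_self_pow₀ hb.le (by norm_num)
          have h2 : 2 ≤ y * b ^ 3 := by
            have := mul_le_mul_of_nonneg_left h1 hy.le
            linarith
          have := mul_le_mul_of_nonneg_right h2 (by positivity : 0 ≤ b + 2)
          linarith
        · rw [le_div_iff₀ (by positivity)]
          have h1 : a ^ 3 ≤ a := pow_le_of_le_one ha.le ha1.le (by norm_num)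
          have h2 : y * a ^ 3 ≤ 1 / 2 := by
            have := mul_le_mul_of_nonneg_left h1 hy.le
            linarith
          have := mul_le_mul_of_nonneg_right h2 (by positivity : 0 ≤ a + 2)
          linarith
      obtain ⟨x, hx, hxy⟩ := intermediate_value_Icc' (by linarith : a ≤ b) hc hmem
      exact ⟨x, lt_of_lt_of_le ha hx.1, hxy⟩
  · ext ⟨α, β⟩
    simp only [Set.mem_setOf_eq, Prod.mk.injEq]
    constructor
    · rintro ⟨hα, hβ⟩
      have hr : √(25 + 90 * α) ^ 2 = 25 + 90 * α := Real.sq_sqrt (by positivity)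
      have hs : 0 < (5 + √(25 + 90 * α)) / (18 * α) := by positivity
      have hq : (5 + √(25 + 90 * α)) / (18 * α) * (18 * α) = 5 + √(25 + 90 * α) := by
        field_simp
      generalize (5 + √(25 + 90 * α)) / (18 * α) = s at *
      have e : α = Qc s * Bstar s := by
        rw [QB_eq s hs, eq_div_iff (by positivity)]
        have hr' : √(25 + 90 * α) = s * (18 * α) - 5 := by linarith
        rw [hr'] at hr
        have : (18 * α) * (α * (18 * s ^ 2)) = (18 * α) * (5 * (2 * s + 1)) := by linarith
        exact mul_left_cancel₀ (by positivity) this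
      refine ⟨s, hs, e, ?_⟩
      rw [hβ, e, P_eq s hs]
    · rintro ⟨s, hs, rfl, rfl⟩
      refine ⟨?_, (P_eq s hs).symm⟩
      rw [QB_eq s hs]
      positivity

end
end
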